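/- arXiv:1812.09824 — 6 statements merged into one kernel-verified Lean document; each statement's English description precedes it below -/
import Mathlib

section
/- Let S be a stream of N items and run the Misra-Gries algorithm with capacity k = ⌈1/ε⌉ on S, where ε is a real with 1/N ≤ ε ≤ 1. Then for every item x ∈ U, the final table satisfies C[x] ≤ f_x and f_x < C[x] + εN. -/
/-!
Misra-Gries algorithm with capacity `k` over a stream `S : List U`.
The table is a function `C : U → ℕ` (finitely supported since `U` is a fintype).
-/

/-- One step of the Misra-Gries algorithm with capacity `k`:
if the arriving item has positive count, increment it; otherwise, if fewer
than `k` items have positive count, give it count 1; otherwise decrement every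
positive count (and discard the arriving item). -/
def mgStep {U : Type*} [Fintype U] [DecidableEq U] (k : ℕ) (C : U → ℕ) (a : U) : U → ℕ :=
  if 0 < C a then
    Function.update C a (C a + 1)
  else if (Finset.univ.filter fun y => 0 < C y).card < k then
    Function.update C a 1
  else
    fun y => C y - 1

/-- Running Misra-Gries with capacity `k` on the stream `S`, starting from the
all-zero table. -/
def mgRun {U : Type*} [Fintype U] [DecidableEq U] (k : ℕ) (S : List U) : U → ℕ :=
  S.foldl (mgStep k) fun _ => 0

theorem mg_invariant {U : Type*} [Fintype U] [DecidableEq U] (k : ℕ) (S : List U) :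
    ∃ d : ℕ, (∀ x, mgRun k S x ≤ S.count x ∧ S.count x ≤ mgRun k S x + d) ∧
      (k + 1) * d + ∑ x, mgRun k S x ≤ S.length := by
  induction S using List.reverseRecOn with
  | nil => exact ⟨0, by simp [mgRun]⟩
  | append_singleton S a ih =>
    obtain ⟨d, h1, h2⟩ := ih
    have hrun : mgRun k (S ++ [a]) = mgStep k (mgRun k S) a := by simp [mgRun]
    rw [hrun]
    generalize mgRun k S = C at h1 h2
    have hcount : ∀ x, (S ++ [a]).count x = S.count x + if x = a then 1 else 0 := by
      intro x
      by_cases h : x = a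
      · subst h; simp
      · simp [h, List.count_cons, Ne.symm h]
    have hup : (∃ d : ℕ, (∀ x, Function.update C a (C a + 1) x ≤ (S ++ [a]).count x ∧
        (S ++ [a]).count x ≤ Function.update C a (C a + 1) x + d) ∧
        (k + 1) * d + ∑ x, Function.update C a (C a + 1) x ≤ (S ++ [a]).length) := by
      have hf : ∀ x, Function.update C a (C a + 1) x = C x + if x = a then 1 else 0 := by
        intro x
        by_cases h : x = a
        · subst h; simp
        · simp [h]
      refine ⟨d, fun x => ?_, ?_⟩
      · rw [hf, hcount]
        have := h1 x
        omega
      · simp only [hf, Finset.sum_add_distrib, List.length_append]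
        simp
        omega
    unfold mgStep
    split_ifs with p q
    · exact hup
    · have h0 : C a = 0 := by omega
      simpa [h0] using hup
    · refine ⟨d + 1, fun x => ?_, ?_⟩
      · rw [hcount]
        have := h1 x
        by_cases h : x = a
        · subst h; simp; omega
        · simp [h]; omega
      · have hs : ∑ x, (C x - 1) + (Finset.univ.filter fun y => 0 < C y).card = ∑ x, C x := by
          rw [Finset.card_filter, ← Finset.sum_add_distrib]
          refine Finset.sum_congr rfl fun x _ => ?_
          split_ifs <;> omega
        simp only [List.length_append, List.length_singleton, mul_add]
        omega

/-- Running Misra-Gries with capacity `k = ⌈1/ε⌉` on a stream `S`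
of `N` items, where `1/N ≤ ε ≤ 1`, the final table `C` satisfies
`C[x] ≤ f_x` and `f_x < C[x] + εN` for every item `x`. -/
theorem misraGries_estimate {U : Type*} [Fintype U] [DecidableEq U]
    (S : List U) (hN : 0 < S.length) (ε : ℝ)
    (hε₁ : 1 / (S.length : ℝ) ≤ ε) (hε₂ : ε ≤ 1)
    (k : ℕ) (hk : k = ⌈1 / ε⌉₊) :
    ∀ x : U,
      mgRun k S x ≤ S.count x ∧
      (S.count x : ℝ) < (mgRun k S x : ℝ) + ε * (S.length : ℝ) := by
  intro x
  obtain ⟨d, h1, h2⟩ := mg_invariant k S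
  refine ⟨(h1 x).1, ?_⟩
  have hNr : (0 : ℝ) < S.length := by exact_mod_cast hN
  have hε : 0 < ε := lt_of_lt_of_le (by positivity) hε₁
  have hkε : 1 / ε ≤ (k : ℝ) := hk ▸ Nat.le_ceil _
  rw [div_le_iff₀ hε] at hkε
  have h3 : ((k : ℝ) + 1) * d ≤ S.length := by
    exact_mod_cast (Nat.le_add_right _ _).trans h2
  have h4 : (S.count x : ℝ) ≤ mgRun k S x + d := by exact_mod_cast (h1 x).2
  have h5 : (d : ℝ) < ε * S.length := by
    rcases Nat.eq_zero_or_pos d with h | h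
    · subst h; simp; positivity
    · have hd : (0 : ℝ) < d := by exact_mod_cast h
      nlinarith [mul_le_mul_of_nonneg_left h3 hε.le, mul_le_mul_of_nonneg_right hkε hd.le,
        mul_pos hε hd]
  linarith
end

section
/- Let S be a stream of N items and run the Misra-Gries algorithm with capacity k on S. Then for every t ∈ {0, 1, …, N} and every item x ∈ U, the table after t items satisfies C_t[x] ≤ f_x(t), and f_x(t) − C_t[x] is at most the number of decrement steps performed during the first t items; consequently f_x(t) ≤ C_t[x] + ⌊t/(k+1)⌋. -/
/-- The number of decrement steps performed by the Misra-Gries algorithm with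
capacity `k`, starting from table `C`, while processing the stream. -/
def mgDecs {U : Type*} [Fintype U] [DecidableEq U] (k : ℕ) : (U → ℕ) → List U → ℕ
  | _, [] => 0
  | C, a :: rest =>
      (if 0 < C a ∨ (Finset.univ.filter fun y => 0 < C y).card < k then 0 else 1)
        + mgDecs k (mgStep k C a) rest

/-- A non-decrement step adds one to the counter of the arriving item. -/
theorem mgStep_of_inc {U : Type*} [Fintype U] [DecidableEq U] (k : ℕ) (C : U → ℕ) (a : U)
    (h : 0 < C a ∨ (Finset.univ.filter fun y => 0 < C y).card < k) :
    mgStep k C a = fun y => C y + if a = y then 1 else 0 := by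
  funext y
  unfold mgStep
  by_cases h1 : 0 < C a
  · rw [if_pos h1]
    by_cases hy : a = y
    · subst hy; simp
    · simp [Function.update_of_ne (Ne.symm hy), hy]
  · have h2 := h.resolve_left h1
    rw [if_neg h1, if_pos h2]
    by_cases hy : a = y
    · subst hy; simp; omega
    · simp [Function.update_of_ne (Ne.symm hy), hy]

/-- The joint invariant, from an arbitrary starting table. -/
theorem mg_invariant_s2 {U : Type*} [Fintype U] [DecidableEq U] (k : ℕ) (l : List U) :
    ∀ C : U → ℕ,
      (∀ x, l.foldl (mgStep k) C x ≤ C x + l.count x ∧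
        C x + l.count x ≤ l.foldl (mgStep k) C x + mgDecs k C l) ∧
      (∑ x, l.foldl (mgStep k) C x) + (k + 1) * mgDecs k C l ≤ (∑ x, C x) + l.length := by
  induction l with
  | nil => intro C; simp [mgDecs]
  | cons a l ih =>
    intro C
    obtain ⟨ih1, ih2⟩ := ih (mgStep k C a)
    simp only [List.foldl_cons, mgDecs, List.length_cons, List.count_cons, beq_iff_eq]
    by_cases h : 0 < C a ∨ (Finset.univ.filter fun y => 0 < C y).card < k
    · rw [if_pos h]
      have hs := mgStep_of_inc k C a h
      have hsum : ∑ x, mgStep k C a x = (∑ x, C x) + 1 := by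
        rw [hs, Finset.sum_add_distrib]; simp
      refine ⟨fun x => ?_, ?_⟩
      · have := ih1 x
        have hx : mgStep k C a x = C x + if a = x then 1 else 0 := congrFun hs x
        omega
      · rw [Nat.zero_add]; omega
    · rw [if_neg h]
      have hs : mgStep k C a = fun y => C y - 1 := by
        unfold mgStep
        rw [if_neg (fun h1 => h (Or.inl h1)), if_neg (fun h1 => h (Or.inr h1))]
      have ha : C a = 0 := by
        by_contra h0
        exact h (Or.inl (Nat.pos_of_ne_zero h0))
      have hc : k ≤ (Finset.univ.filter fun y => 0 < C y).card := by
        by_contra h0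
        exact h (Or.inr (not_le.mp h0))
      have hsum : (∑ x, mgStep k C a x) + (Finset.univ.filter fun y => 0 < C y).card
          = ∑ x, C x := by
        rw [hs, Finset.card_filter, ← Finset.sum_add_distrib]
        refine Finset.sum_congr rfl fun x _ => ?_
        split_ifs <;> omega
      refine ⟨fun x => ?_, ?_⟩
      · have := ih1 x
        have hx : mgStep k C a x = C x - 1 := congrFun hs x
        by_cases hax : a = x
        · subst hax
          simp only [if_true]
          omega
        · simp only [if_neg hax]
          omega
      · rw [Nat.mul_add, Nat.mul_one]; omega

/-- For every `t ∈ {0,…,N}` and every item `x`, the Misra-Gries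
table after `t` items satisfies `C_t[x] ≤ f_x(t)`, the deficiency
`f_x(t) − C_t[x]` is at most the number of decrement steps performed during the
first `t` items, and consequently `f_x(t) ≤ C_t[x] + ⌊t/(k+1)⌋`. -/
theorem misraGries_prefix_bounds {U : Type*} [Fintype U] [DecidableEq U]
    (S : List U) (k : ℕ) (hk : 0 < k) :
    ∀ t ≤ S.length, ∀ x : U,
      mgRun k (S.take t) x ≤ (S.take t).count x ∧
      (S.take t).count x - mgRun k (S.take t) x ≤ mgDecs k (fun _ => 0) (S.take t) ∧
      (S.take t).count x ≤ mgRun k (S.take t) x + t / (k + 1) := by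
  intro t ht x
  obtain ⟨h1, h2⟩ := mg_invariant_s2 k (S.take t) (fun _ => 0)
  have hx := h1 x
  simp only [Nat.zero_add, Finset.sum_const_zero, List.length_take, Nat.min_eq_left ht] at hx h2
  have hd : mgDecs k (fun _ => 0) (S.take t) ≤ t / (k + 1) := by
    rw [Nat.le_div_iff_mul_le (by omega : 0 < k + 1), Nat.mul_comm]
    omega
  unfold mgRun
  omega
end

section
/- Let S be a stream of N items, let 1/N ≤ ε < φ ≤ 1, and run the Misra-Gries algorithm with capacity k = ⌈1/ε⌉ on S, producing final table C. Then reporting exactly those items x with C[x] > (φ − ε)N solves the (ε, φ)-heavy hitters problem: every item x with f_x ≥ φN is reported, and no item x with f_x ≤ (φ − ε)N is reported. -/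
/-- Misra-Gries invariant: after processing `S` there is a number `d` of decrement steps. -/
theorem mgRun_invariant {U : Type*} [Fintype U] [DecidableEq U] (k : ℕ) (S : List U) :
    ∃ d : ℕ, (∀ x, mgRun k S x ≤ S.count x ∧ S.count x ≤ mgRun k S x + d) ∧
      (∑ x, mgRun k S x) + d * (k + 1) ≤ S.length := by
  induction S using List.reverseRecOn with
  | nil => exact ⟨0, by simp [mgRun]⟩
  | append_singleton S a ih =>
    obtain ⟨d, h1, h2⟩ := ih
    have hrun : mgRun k (S ++ [a]) = mgStep k (mgRun k S) a := by
      simp [mgRun, List.foldl_append]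
    have hcount : ∀ x, (S ++ [a]).count x = S.count x + if a = x then 1 else 0 := by
      intro x
      simp [List.count_append, List.count_singleton]
    rw [hrun]
    simp only [hcount, List.length_append, List.length_singleton]
    generalize mgRun k S = C at *
    have key : ∀ c, c = C a + 1 → ∃ d : ℕ, (∀ x, Function.update C a c x ≤
        S.count x + (if a = x then 1 else 0) ∧
        S.count x + (if a = x then 1 else 0) ≤ Function.update C a c x + d) ∧
        (∑ x, Function.update C a c x) + d * (k + 1) ≤ S.length + 1 := by
      rintro c rfl
      have hu : ∀ x, Function.update C a (C a + 1) x = C x + if a = x then 1 else 0 := by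
        intro x
        by_cases h : a = x
        · subst h; simp
        · simp [h, Function.update_of_ne (Ne.symm h)]
      refine ⟨d, fun x => ?_, ?_⟩
      · rw [hu]
        have := h1 x
        omega
      · simp only [hu, Finset.sum_add_distrib, Finset.sum_ite_eq, Finset.mem_univ, if_true]
        omega
    unfold mgStep
    split_ifs with ha hk
    · exact key _ rfl
    · exact key _ (by omega)
    · refine ⟨d + 1, fun x => ?_, ?_⟩
      · have := h1 x
        by_cases h : a = x
        · subst h; simp only [if_true]; omega
        · simp only [h, if_false]; omega
      · have hs : ∑ x, C x = (∑ x, (C x - 1)) + (Finset.univ.filter fun y => 0 < C y).card := by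
          rw [Finset.card_filter, ← Finset.sum_add_distrib]
          refine Finset.sum_congr rfl fun x _ => ?_
          split_ifs <;> omega
        have : (d + 1) * (k + 1) = d * (k + 1) + k + 1 := by ring
        beta_reduce
        omega

/-- Let `1/N ≤ ε < φ ≤ 1` and run Misra-Gries with capacity
`k = ⌈1/ε⌉` on a stream `S` of `N` items, producing final table `C`. Reporting
exactly the items `x` with `C[x] > (φ − ε)N` solves the `(ε, φ)`-heavy hitters
problem: every item with `f_x ≥ φN` is reported, and no item with
`f_x ≤ (φ − ε)N` is reported. -/
theorem misraGries_heavyHitters {U : Type*} [Fintype U] [DecidableEq U]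
    (S : List U) (hN : 0 < S.length) (ε φ : ℝ)
    (hε₁ : 1 / (S.length : ℝ) ≤ ε) (hεφ : ε < φ) (hφ : φ ≤ 1)
    (k : ℕ) (hk : k = ⌈1 / ε⌉₊) :
    ∀ x : U,
      (φ * (S.length : ℝ) ≤ (S.count x : ℝ) →
        (φ - ε) * (S.length : ℝ) < (mgRun k S x : ℝ)) ∧
      ((S.count x : ℝ) ≤ (φ - ε) * (S.length : ℝ) →
        ¬ ((φ - ε) * (S.length : ℝ) < (mgRun k S x : ℝ))) := by
  intro x
  obtain ⟨d, h1, h2⟩ := mgRun_invariant k S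
  obtain ⟨hle, hge⟩ := h1 x
  have hN' : (0 : ℝ) < S.length := by exact_mod_cast hN
  have hε : 0 < ε := lt_of_lt_of_le (by positivity) hε₁
  have hk1 : 1 / ε ≤ (k : ℝ) := hk ▸ Nat.le_ceil _
  have hk2 : 1 ≤ k * ε := by rwa [div_le_iff₀ hε] at hk1
  have hd : (d : ℝ) * (k + 1) ≤ S.length := by
    have : d * (k + 1) ≤ S.length := by omega
    exact_mod_cast this
  have hle' : (mgRun k S x : ℝ) ≤ S.count x := by exact_mod_cast hle
  have hge' : (S.count x : ℝ) ≤ mgRun k S x + d := by exact_mod_cast hge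
  have hdlt : (d : ℝ) < ε * S.length := by
    have h3 : (d : ℝ) * (k + 1) * ε ≤ S.length * ε := mul_le_mul_of_nonneg_right hd hε.le
    have hd0 : (0 : ℝ) ≤ d := Nat.cast_nonneg d
    have h4 : (d : ℝ) * 1 ≤ d * (k * ε) := mul_le_mul_of_nonneg_left hk2 hd0
    rcases hd0.eq_or_lt with h | h
    · rw [← h]; positivity
    · have : 0 < (d : ℝ) * ε := by positivity
      nlinarith
  constructor
  · intro h
    nlinarith
  · intro h
    linarith
end

section
/- Let S be a stream of N items and run the external-memory Misra-Gries structure with in-memory capacity M, growth factor r > 1, and L levels on S. Suppose φ > 1/M and that the item x = s_t has its ⌈φN⌉-th occurrence at time t ≤ N (i.e., a φ-event occurs at time t). Then, immediately after processing s_t, the in-memory level-0 count satisfies C_0[x] > (φ − 1/M)N. Consequently, an algorithm that triggers a query whenever some item's level-0 count is incremented past (φ − 1/M)N misses no φ-event. -/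
/-!
The external-memory Misra-Gries structure: a cascade of Misra-Gries tables
`C_0, …, C_{L−1}`, where level `i` has capacity `cap i = r^i·M`.
-/

/-- Inserting an item `x` into level `i` of the external-memory Misra-Gries
structure; `gas` is the number of remaining levels (`L − i`). If the arriving
item has positive count at level `i`, increment it; otherwise, if fewer than
`cap i` items have positive count at level `i`, give it count 1; otherwise
decrement every positive count at level `i`, discard the arriving item and
recursively insert one instance of each decremented item into level `i + 1`. -/
noncomputable def emInsert {U : Type*} [Fintype U] [DecidableEq U] (cap : ℕ → ℕ) :
    ℕ → ℕ → (ℕ → U → ℕ) → U → (ℕ → U → ℕ)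
  | 0, _, T, _ => T
  | gas + 1, i, T, x =>
    if 0 < T i x then
      Function.update T i (Function.update (T i) x (T i x + 1))
    else if (Finset.univ.filter fun y => 0 < T i y).card < cap i then
      Function.update T i (Function.update (T i) x 1)
    else
      ((Finset.univ.filter fun y => 0 < T i y).toList).foldl
        (fun Tc y => emInsert cap gas (i + 1) Tc y)
        (Function.update T i fun y => T i y - 1)

/-- Running the external-memory Misra-Gries structure with `L` levels and
level capacities `cap` on the stream `S` (each stream item is inserted into
level `0`), starting from all-zero tables. -/
noncomputable def emRun {U : Type*} [Fintype U] [DecidableEq U]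
    (cap : ℕ → ℕ) (L : ℕ) (S : List U) : ℕ → U → ℕ :=
  S.foldl (fun T x => emInsert cap L 0 T x) fun _ _ => 0

/-- `Ĉ_j[x]`: the consolidated count of `x` over levels `0, …, j`. -/
def emHat {U : Type*} (T : ℕ → U → ℕ) (j : ℕ) (x : U) : ℕ :=
  ∑ i ∈ Finset.range (j + 1), T i x


theorem emInsert_lower {U : Type*} [Fintype U] [DecidableEq U] (cap : ℕ → ℕ) (gas : ℕ) :
    ∀ (i : ℕ) (T : ℕ → U → ℕ) (x : U) (j : ℕ), j < i → emInsert cap gas i T x j = T j := by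
  induction gas with
  | zero => intro i T x j _; simp [emInsert]
  | succ gas ih =>
    intro i T x j hj
    have hne : j ≠ i := by omega
    have hfold : ∀ (l : List U) (T' : ℕ → U → ℕ),
        l.foldl (fun Tc y => emInsert cap gas (i + 1) Tc y) T' j = T' j := by
      intro l
      induction l with
      | nil => intro T'; rfl
      | cons a l ihl =>
        intro T'
        rw [List.foldl_cons, ihl, ih (i + 1) T' a j (by omega)]
    rw [emInsert]
    split_ifs
    · simp [hne]
    · simp [hne]
    · rw [hfold]; simp [hne]

theorem emInsert_level {U : Type*} [Fintype U] [DecidableEq U] (cap : ℕ → ℕ) (gas i : ℕ)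
    (T : ℕ → U → ℕ) (x : U) :
    emInsert cap (gas + 1) i T x i =
      if 0 < T i x then Function.update (T i) x (T i x + 1)
      else if (Finset.univ.filter fun y => 0 < T i y).card < cap i then
        Function.update (T i) x 1
      else fun y => T i y - 1 := by
  have hfold : ∀ (l : List U) (T' : ℕ → U → ℕ),
      l.foldl (fun Tc y => emInsert cap gas (i + 1) Tc y) T' i = T' i := by
    intro l
    induction l with
    | nil => intro T'; rfl
    | cons a l ihl =>
      intro T'
      rw [List.foldl_cons, ihl, emInsert_lower cap gas (i + 1) T' a i (by omega)]
  rw [emInsert]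
  split_ifs
  · simp
  · simp
  · rw [hfold]; simp

theorem sum_update_add {U : Type*} [Fintype U] [DecidableEq U] (f : U → ℕ) (x : U) (v : ℕ) :
    ∑ y, Function.update f x v y + f x = ∑ y, f y + v := by
  rw [Finset.sum_update_of_mem (Finset.mem_univ x),
    ← Finset.add_sum_erase Finset.univ f (Finset.mem_univ x), Finset.sdiff_singleton_eq_erase]
  omega

theorem emRun_invariant {U : Type*} [Fintype U] [DecidableEq U] (cap : ℕ → ℕ) (gas : ℕ)
    (S : List U) :
    ∃ D : ℕ, (cap 0 + 1) * D + ∑ y, emRun cap (gas + 1) S 0 y ≤ S.length ∧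
      ∀ y, S.count y ≤ emRun cap (gas + 1) S 0 y + D := by
  induction S using List.reverseRecOn with
  | nil => exact ⟨0, by simp [emRun], by simp⟩
  | append_singleton S a ih =>
    obtain ⟨D, h1, h2⟩ := ih
    have hrun : emRun cap (gas + 1) (S ++ [a]) 0
        = emInsert cap (gas + 1) 0 (emRun cap (gas + 1) S) a 0 := by
      simp [emRun]
    rw [hrun, emInsert_level]
    generalize emRun cap (gas + 1) S 0 = C at *
    have hcount : ∀ y, (S ++ [a]).count y = S.count y + if a = y then 1 else 0 := by
      intro y
      simp [List.count_append, List.count_singleton]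
    simp only [hcount, List.length_append, List.length_singleton]
    split_ifs with hp hc
    · refine ⟨D, ?_, ?_⟩
      · have := sum_update_add C a (C a + 1)
        omega
      · intro y
        have := h2 y
        by_cases hy : a = y
        · subst hy; simp; omega
        · rw [Function.update_of_ne (Ne.symm hy)]; simp [hy]; omega
    · refine ⟨D, ?_, ?_⟩
      · have := sum_update_add C a 1
        omega
      · intro y
        have := h2 y
        by_cases hy : a = y
        · subst hy; simp; omega
        · rw [Function.update_of_ne (Ne.symm hy)]; simp [hy]; omega
    · refine ⟨D + 1, ?_, ?_⟩
      · have hs : ∑ y, (C y - 1) + (Finset.univ.filter fun y => 0 < C y).card = ∑ y, C y := by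
          rw [Finset.card_filter, ← Finset.sum_add_distrib]
          refine Finset.sum_congr rfl fun y _ => ?_
          split_ifs <;> omega
        rw [mul_add]
        beta_reduce
        omega
      · intro y
        have := h2 y
        by_cases hy : a = y
        · subst hy; simp; omega
        · simp [hy]; omega

/-- Run the external-memory Misra-Gries structure with in-memory
capacity `M`, growth factor `r > 1` and `L` levels (level `i` having capacity
`r^i·M`, assumed integral) on a stream `S` of `N` items. Suppose `φ > 1/M` and
the item `x = s_t` has its `⌈φN⌉`-th occurrence at time `t ≤ N` (a `φ`-event at
time `t`). Then, immediately after processing `s_t`, the in-memory level-0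
count satisfies `C_0[x] > (φ − 1/M)·N`. (Consequently, an algorithm that
triggers a query whenever an item's level-0 count is incremented past
`(φ − 1/M)·N` misses no `φ`-event.) -/
theorem emMisraGries_event_trigger {U : Type*} [Fintype U] [DecidableEq U]
    (S : List U) (M : ℕ) (hM : 1 ≤ M) (r : ℝ) (hr : 1 < r)
    (L : ℕ) (hL : 0 < L)
    (cap : ℕ → ℕ) (hcap : ∀ i < L, (cap i : ℝ) = r ^ i * (M : ℝ))
    (φ : ℝ) (hφM : 1 / (M : ℝ) < φ) (hφ₁ : φ ≤ 1)
    (t : ℕ) (ht : t < S.length) (x : U) (hx : S.get ⟨t, ht⟩ = x)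
    (hevent : (S.take (t + 1)).count x = ⌈φ * (S.length : ℝ)⌉₊) :
    (φ - 1 / (M : ℝ)) * (S.length : ℝ) < (emRun cap L (S.take (t + 1)) 0 x : ℝ) := by
  obtain ⟨gas, rfl⟩ : ∃ g, L = g + 1 := ⟨L - 1, by omega⟩
  obtain ⟨D, h1, h2⟩ := emRun_invariant cap gas (S.take (t + 1))
  have hc0 : cap 0 = M := by
    have := hcap 0 hL
    simpa using this
  rw [hc0] at h1
  have h3 := h2 x
  rw [hevent] at h3
  have hlen : (S.take (t + 1)).length ≤ S.length := by simp
  have hD : (M + 1) * D ≤ S.length := by omega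
  have hDr : ((M : ℝ) + 1) * D ≤ S.length := by exact_mod_cast hD
  have hN : (0 : ℝ) < S.length := by exact_mod_cast (by omega : 0 < S.length)
  have hMr : (0 : ℝ) < M := by exact_mod_cast hM
  have hceil := Nat.le_ceil (φ * (S.length : ℝ))
  have h3r : ((⌈φ * (S.length : ℝ)⌉₊ : ℕ) : ℝ)
      ≤ (emRun cap (gas + 1) (S.take (t + 1)) 0 x : ℝ) + D := by exact_mod_cast h3
  have hlt : (D : ℝ) < 1 / (M : ℝ) * S.length := by
    rw [one_div, inv_mul_eq_div, lt_div_iff₀ hMr]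
    rcases Nat.eq_zero_or_pos D with h0 | h0
    · subst h0; simpa using hN
    · have : (0 : ℝ) < D := by exact_mod_cast h0
      nlinarith
  rw [sub_mul]
  linarith
end

section
/- Let S be a stream of N items and run the external-memory Misra-Gries structure with in-memory capacity M, growth factor r > 1, and L levels on S, and let T > 0 be a real threshold. For each item x, call a rise of x a maximal interval of time steps during which C_0[x] > 0 and during which C_0[x] exceeds T at some moment. Then the total number of rises, summed over all items x, is at most ⌊N/T⌋. In particular, with T = (φ − 1/M)N for φ > 1/M, the total number of rises (and hence of triggered queries, one per rise) is at most M/(φM − 1). -/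
/-- `IsRise c N T x a b`: the time interval `[a, b]` is a *rise* of item `x`
for the level-0 count history `c` (where `c t x` is the level-0 count of `x`
after `t` stream items): a maximal interval of time steps during which the
level-0 count of `x` stays positive, and during which it exceeds `T` at some
moment. -/
def IsRise {U : Type*} (c : ℕ → U → ℕ) (N : ℕ) (T : ℝ) (x : U) (a b : ℕ) : Prop :=
  0 < a ∧ a ≤ b ∧ b ≤ N ∧
  (∀ t, a ≤ t → t ≤ b → 0 < c t x) ∧
  c (a - 1) x = 0 ∧ (b = N ∨ c (b + 1) x = 0) ∧
  (∃ t, a ≤ t ∧ t ≤ b ∧ T < (c t x : ℝ))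

theorem emInsert_step {U : Type*} [Fintype U] [DecidableEq U] (cap : ℕ → ℕ) (L : ℕ)
    (T : ℕ → U → ℕ) (x y : U) :
    emInsert cap L 0 T y 0 x ≤ T 0 x + if y = x then 1 else 0 := by
  cases L with
  | zero => simp [emInsert]
  | succ gas =>
    rw [emInsert]
    have key : ∀ (l : List U) (T' : ℕ → U → ℕ),
        l.foldl (fun Tc y => emInsert cap gas (0 + 1) Tc y) T' 0 = T' 0 := by
      intro l
      induction l with
      | nil => intro T'; rfl
      | cons y l ihl =>
        intro T'
        rw [List.foldl_cons, ihl, emInsert_lower cap gas _ _ _ _ (by omega)]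
    by_cases hyx : y = x
    · subst hyx
      rw [if_pos (rfl : y = y)]
      split_ifs
      · simp
      · simp
      · rw [key, Function.update_self]; omega
    · have hxy : x ≠ y := Ne.symm hyx
      rw [if_neg hyx]
      split_ifs
      · rw [Function.update_self, Function.update_of_ne hxy]; omega
      · rw [Function.update_self, Function.update_of_ne hxy]; omega
      · rw [key, Function.update_self]; omega

theorem emRun_step {U : Type*} [Fintype U] [DecidableEq U] (cap : ℕ → ℕ) (L : ℕ)
    (S : List U) (x : U) (t : ℕ) :
    emRun cap L (S.take (t + 1)) 0 x ≤
      emRun cap L (S.take t) 0 x + if S[t]? = some x then 1 else 0 := by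
  rw [List.take_add_one]
  cases h : S[t]? with
  | none => simp
  | some y =>
    have := emInsert_step cap L (emRun cap L (S.take t)) x y
    simpa [emRun, List.foldl_append] using this

theorem emRun_growth {U : Type*} [Fintype U] [DecidableEq U] (cap : ℕ → ℕ) (L : ℕ)
    (S : List U) (x : U) (a : ℕ) (ha : emRun cap L (S.take a) 0 x = 0) (t : ℕ) (hat : a ≤ t) :
    emRun cap L (S.take t) 0 x ≤ ((Finset.Ico a t).filter fun s => S[s]? = some x).card := by
  induction t, hat using Nat.le_induction with
  | base => simp [ha]
  | succ t hat ih =>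
    refine (emRun_step cap L S x t).trans ?_
    rw [← Finset.insert_Ico_right_eq_Ico_add_one hat, Finset.filter_insert]
    split_ifs
    · rw [Finset.card_insert_of_notMem (by simp)]; omega
    · simpa using ih

theorem rises_item {U : Type*} [Fintype U] [DecidableEq U] (cap : ℕ → ℕ) (L : ℕ)
    (S : List U) (x : U) (T : ℝ) :
    ({p : ℕ × ℕ |
      IsRise (fun t => emRun cap L (S.take t) 0) S.length T x p.1 p.2}.ncard : ℝ) * T ≤
      (((Finset.range S.length).filter fun s => S[s]? = some x).card : ℝ) := by
  set R := {p : ℕ × ℕ |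
      IsRise (fun t => emRun cap L (S.take t) 0) S.length T x p.1 p.2} with hR
  have hfin : R.Finite := by
    apply (Finset.finite_toSet (Finset.Iic S.length ×ˢ Finset.Iic S.length)).subset
    rintro ⟨a, b⟩ ⟨h0, h1, h2, -⟩
    simp only at h0 h1 h2
    simp
    omega
  rw [Set.ncard_eq_toFinset_card R hfin]
  let F : ℕ × ℕ → Finset ℕ := fun p =>
    (Finset.Ico (p.1 - 1) p.2).filter fun s => S[s]? = some x
  have hbig : ∀ p ∈ hfin.toFinset, T ≤ ((F p).card : ℝ) := by
    rintro ⟨a, b⟩ hp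
    rw [Set.Finite.mem_toFinset] at hp
    obtain ⟨h0, h1, h2, h3, h4, h5, t, h6, h7, h8⟩ := hp
    simp only at h0 h1 h2 h3 h4 h5 h6 h7 h8
    have hg := emRun_growth cap L S x (a - 1) h4 t (by omega)
    have hs : ((Finset.Ico (a - 1) t).filter fun s => S[s]? = some x).card ≤ (F (a, b)).card :=
      Finset.card_le_card (Finset.filter_subset_filter _ (Finset.Ico_subset_Ico le_rfl h7))
    have : ((emRun cap L (S.take t) 0 x : ℕ) : ℝ) ≤ ((F (a, b)).card : ℝ) := by
      exact_mod_cast hg.trans hs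
    linarith
  have hlt : ∀ p ∈ R, ∀ q ∈ R, p.1 < q.1 → p.2 < q.1 - 1 := by
    rintro ⟨a, b⟩ ⟨-, -, -, h3, -, -, -⟩ ⟨a', b'⟩ ⟨-, -, -, -, h4, -, -⟩ h
    simp only at h3 h4 h ⊢
    by_contra hc
    have := h3 (a' - 1) (by omega) (by omega)
    omega
  have hle : ∀ p ∈ R, ∀ q ∈ R, p.1 = q.1 → p.2 ≤ q.2 := by
    rintro ⟨a, b⟩ ⟨-, h1, h2, h3, -, -, -⟩ ⟨a', b'⟩ ⟨-, h1', -, -, -, h5, -⟩ h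
    simp only at h1 h2 h3 h1' h5 h ⊢
    by_contra hc
    rcases h5 with h5 | h5
    · omega
    · have := h3 (b' + 1) (by omega) (by omega)
      omega
  have hdisj : (hfin.toFinset : Set (ℕ × ℕ)).PairwiseDisjoint F := by
    intro p hp q hq hpq
    simp only [Set.Finite.coe_toFinset] at hp hq
    refine Finset.disjoint_left.mpr fun s hs hs' => hpq ?_
    simp only [F, Finset.mem_filter, Finset.mem_Ico] at hs hs'
    rcases lt_trichotomy p.1 q.1 with h | h | h
    · have := hlt p hp q hq h
      omega
    · exact Prod.ext h (le_antisymm (hle p hp q hq h) (hle q hq p hp h.symm))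
    · have := hlt q hq p hp h
      omega
  have hcard : ∑ p ∈ hfin.toFinset, (F p).card ≤
      ((Finset.range S.length).filter fun s => S[s]? = some x).card := by
    rw [← Finset.card_biUnion hdisj]
    apply Finset.card_le_card
    intro s hs
    simp only [F, Finset.mem_biUnion, Finset.mem_filter, Finset.mem_Ico] at hs
    obtain ⟨p, hp, h1, h2⟩ := hs
    simp only [Finset.mem_filter, Finset.mem_range]
    exact ⟨(List.getElem?_eq_some_iff.mp h2).1, h2⟩
  calc (hfin.toFinset.card : ℝ) * T = ∑ p ∈ hfin.toFinset, T := by simp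
    _ ≤ ∑ p ∈ hfin.toFinset, ((F p).card : ℝ) := Finset.sum_le_sum hbig
    _ ≤ _ := by exact_mod_cast hcard

theorem rises_total {U : Type*} [Fintype U] [DecidableEq U] (cap : ℕ → ℕ) (L : ℕ)
    (S : List U) (T : ℝ) (hT : 0 < T) :
    (∑ x : U, ({p : ℕ × ℕ |
      IsRise (fun t => emRun cap L (S.take t) 0) S.length T x p.1 p.2}.ncard : ℝ)) ≤
      (S.length : ℝ) / T := by
  rw [le_div_iff₀ hT, Finset.sum_mul]
  refine (Finset.sum_le_sum fun x _ => rises_item cap L S x T).trans ?_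
  have : ∑ x : U, ((Finset.range S.length).filter fun s => S[s]? = some x).card ≤ S.length := by
    rw [← Finset.card_biUnion]
    · refine (Finset.card_le_card (t := Finset.range S.length) ?_).trans (by simp)
      intro s hs
      simp only [Finset.mem_biUnion, Finset.mem_filter] at hs
      exact hs.choose_spec.2.1
    · intro x _ y _ hxy
      refine Finset.disjoint_left.mpr fun s hs hs' => hxy ?_
      simp only [Finset.mem_filter] at hs hs'
      exact Option.some_injective _ (hs.2.symm.trans hs'.2)
  exact_mod_cast this

/-- Run the external-memory Misra-Gries structure with in-memory
capacity `M`, growth factor `r > 1` and `L` levels (level `i` having capacity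
`r^i·M`, assumed integral) on a stream `S` of `N` items, and let `T > 0` be a
real threshold. The total number of rises of the level-0 count, summed over all
items, is at most `⌊N/T⌋`. In particular, with `T = (φ − 1/M)·N` for
`φ > 1/M`, the total number of rises (hence of triggered queries, one per rise)
is at most `M/(φM − 1)`. -/
theorem emMisraGries_rises_bound {U : Type*} [Fintype U] [DecidableEq U]
    (S : List U) (M : ℕ) (hM : 1 ≤ M) (r : ℝ) (hr : 1 < r)
    (L : ℕ) (cap : ℕ → ℕ) (hcap : ∀ i < L, (cap i : ℝ) = r ^ i * (M : ℝ))
    (T : ℝ) (hT : 0 < T) :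
    ((∑ x : U,
        {p : ℕ × ℕ |
          IsRise (fun t => emRun cap L (S.take t) 0) S.length T x p.1 p.2}.ncard : ℤ)
        ≤ ⌊(S.length : ℝ) / T⌋) ∧
    (∀ φ : ℝ, 1 / (M : ℝ) < φ → T = (φ - 1 / (M : ℝ)) * (S.length : ℝ) →
      ((∑ x : U,
          {p : ℕ × ℕ |
            IsRise (fun t => emRun cap L (S.take t) 0) S.length T x p.1 p.2}.ncard : ℝ)
          ≤ (M : ℝ) / (φ * (M : ℝ) - 1))) := by
  have key := rises_total cap L S T hT
  refine ⟨?_, ?_⟩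
  · rw [Int.le_floor]
    push_cast
    exact key
  · intro φ hφ hTφ
    refine key.trans (le_of_eq ?_)
    have hM0 : (0 : ℝ) < M := by exact_mod_cast hM
    have hN : (S.length : ℝ) ≠ 0 := by
      intro h
      rw [h, mul_zero] at hTφ
      exact hT.ne' hTφ
    have h1 : φ - 1 / (M : ℝ) ≠ 0 := by linarith
    have h2 : φ * (M : ℝ) - 1 = (φ - 1 / (M : ℝ)) * M := by field_simp
    rw [hTφ, h2]
    field_simp
end

section
/- Let S be a stream of N items whose frequencies satisfy the power-law tail bound with exponent θ > 1, let r > 1 and 0 < ε ≤ 1 with rεN ≥ 1, let L ≥ 1 be an integer, and define the level thresholds τ_L = (rεN)^{1/(θ−1)} and τ_i = r^{1/(θ−1)} τ_{i+1} for 1 ≤ i ≤ L−1. Then for every integer i with 1 ≤ i ≤ L−1, the number of distinct items x with f_x > Σ_{ℓ=i+1}^{L} τ_ℓ (the items pinned at level i) is at most 1/(r^{L−i} ε), i.e., at most half the size 2/(r^{L−i} ε) of level i; moreover, the number of distinct items x with f_x > τ_L is at most 1/(rε). -/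
/-- Let `S` be a stream of `N` items whose frequencies satisfy
the power-law tail bound with exponent `θ > 1` (for every real `c ≥ 1`, the
number of distinct items `x` with `f_x > c` is at most `N/c^{θ−1}`), let
`r > 1` and `0 < ε ≤ 1` with `rεN ≥ 1`, let `L ≥ 1` be an integer, and define
the level thresholds `τ_L = (rεN)^{1/(θ−1)}` and `τ_i = r^{1/(θ−1)}·τ_{i+1}`
for `1 ≤ i ≤ L−1`. Then for every `1 ≤ i ≤ L−1`, the number of distinct items
`x` with `f_x > Σ_{ℓ=i+1}^{L} τ_ℓ` (the items pinned at level `i`) is at most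
`1/(r^{L−i}·ε)`, i.e. at most half the size `2/(r^{L−i}·ε)` of level `i`;
moreover, the number of distinct items `x` with `f_x > τ_L` is at most
`1/(rε)`. -/
theorem powerLaw_pinned_items {U : Type*} [Fintype U] [DecidableEq U]
    (S : List U) (θ r ε : ℝ) (hθ : 1 < θ) (hr : 1 < r)
    (hε₀ : 0 < ε) (hε₁ : ε ≤ 1) (hrεN : 1 ≤ r * ε * (S.length : ℝ))
    (htail : ∀ c : ℝ, 1 ≤ c →
      ((Finset.univ.filter fun x : U => c < (S.count x : ℝ)).card : ℝ)
        ≤ (S.length : ℝ) / c ^ (θ - 1))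
    (L : ℕ) (hL : 1 ≤ L) (τ : ℕ → ℝ)
    (hτL : τ L = (r * ε * (S.length : ℝ)) ^ (1 / (θ - 1)))
    (hτ : ∀ i : ℕ, 1 ≤ i → i ≤ L - 1 → τ i = r ^ (1 / (θ - 1)) * τ (i + 1)) :
    (∀ i : ℕ, 1 ≤ i → i ≤ L - 1 →
      ((Finset.univ.filter fun x : U =>
          (∑ ℓ ∈ Finset.Icc (i + 1) L, τ ℓ) < (S.count x : ℝ)).card : ℝ)
        ≤ 1 / (r ^ (L - i) * ε)) ∧
    ((Finset.univ.filter fun x : U => τ L < (S.count x : ℝ)).card : ℝ)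
      ≤ 1 / (r * ε) := by
  have hθ' : 0 < θ - 1 := by linarith
  have hr0 : 0 < r := by linarith
  have hN : 0 < (S.length : ℝ) := by
    by_contra h
    have h0 : (S.length : ℝ) ≤ 0 := not_lt.mp h
    have := mul_nonpos_of_nonneg_of_nonpos (mul_pos hr0 hε₀).le h0
    linarith
  have key : ∀ k : ℕ, k + 1 ≤ L →
      τ (L - k) = (r ^ (k + 1) * ε * (S.length : ℝ)) ^ (1 / (θ - 1)) := by
    intro k
    induction k with
    | zero => intro _; simpa using hτL
    | succ k ih =>
      intro hk
      have h1 := hτ (L - (k + 1)) (by omega) (by omega)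
      rw [show L - (k + 1) + 1 = L - k by omega, ih (by omega),
        ← Real.mul_rpow hr0.le (by positivity)] at h1
      rw [h1]
      congr 1
      ring
  have base : ∀ k : ℕ, 1 ≤ r ^ (k + 1) * ε * (S.length : ℝ) := by
    intro k
    have h1 : 1 ≤ r ^ k := one_le_pow₀ hr.le
    have : r ^ (k + 1) * ε * (S.length : ℝ) = r ^ k * (r * ε * (S.length : ℝ)) := by ring
    rw [this]
    exact one_le_mul_of_one_le_of_one_le h1 hrεN
  have one_le : ∀ k : ℕ, k + 1 ≤ L → 1 ≤ τ (L - k) := by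
    intro k hk
    rw [key k hk]
    exact Real.one_le_rpow (base k) (by positivity)
  have bound : ∀ k : ℕ, k + 1 ≤ L →
      ((Finset.univ.filter fun x : U => τ (L - k) < (S.count x : ℝ)).card : ℝ)
        ≤ 1 / (r ^ (k + 1) * ε) := by
    intro k hk
    refine (htail _ (one_le k hk)).trans (le_of_eq ?_)
    rw [key k hk, ← Real.rpow_mul (by linarith [base k]), one_div_mul_cancel hθ'.ne',
      Real.rpow_one]
    field_simp
  refine ⟨?_, by simpa using bound 0 hL⟩
  intro i hi hiL
  have hb := bound (L - i - 1) (by omega)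
  rw [show L - i - 1 + 1 = L - i by omega, show L - (L - i - 1) = i + 1 by omega] at hb
  refine le_trans ?_ hb
  have hsum : τ (i + 1) ≤ ∑ ℓ ∈ Finset.Icc (i + 1) L, τ ℓ := by
    apply Finset.single_le_sum (f := τ)
    · intro j hj
      rw [Finset.mem_Icc] at hj
      have := one_le (L - j) (by omega)
      rw [show L - (L - j) = j by omega] at this
      linarith
    · rw [Finset.mem_Icc]; omega
  exact_mod_cast Finset.card_le_card
    (Finset.monotone_filter_right _ (fun x _ hx => lt_of_le_of_lt hsum hx))
end
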